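/- Let N ≥ 1, let 0 ≤ a < b, and let P be the product of N copies of the uniform probability measure on [a,b], with coordinates z_1,…,z_N and partial sums S_k = Σ_{i=1}^k z_i (S_0 = 0). Let γ > 0 satisfy γ ≥ (N−1)a, and define k* as the least k ∈ {1,…,N} with S_k ≥ γ, with k* = N if no such k exists. For each k ∈ {0,…,N−1} set γ'_k = (γ − ka)/(b − a) and γ*_k = min(max(⌊γ'_k⌋, 0), k). Then E[k*] = Σ_{k=0}^{N-1} (1/k!) Σ_{j=0}^{γ*_k} (−1)^j C(k,j) (min(γ'_k, k) − j)^k. -/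

import Mathlib

open MeasureTheory
open scoped Classical

/-- The uniform probability measure on the interval `[a,b]`. -/
noncomputable def unif (a b : ℝ) : Measure ℝ :=
  (volume (Set.Icc a b))⁻¹ • volume.restrict (Set.Icc a b)

/-!
Along almost every sample path the partial sums `S_k` increase, so `k < k*` holds exactly when
`S_k < γ`, and `E[k*] = ∑_{k < N} P(S_k < γ)`. After rescaling `[a, b]` to the unit interval, the
probabilities `F_k` of the events `S_k < x` satisfy `F_{k+1}(x) = ∫ F_k` over `[x - 1, x]`, and this
recursion is solved by the `k`-th backward difference of `x₊ ^ k / k!`, the Irwin–Hall formula.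
For `x ≤ k` its terms with `j > x` vanish; for `x > k` all terms are present and add up to `1`,
being `1 / k!` times the `k`-th difference of a monic polynomial of degree `k`, which is also the
value of the closed form at `min x k = k`.
-/

open scoped fwdDiff Nat

section HittingTime

variable {Ω : Type*}

lemma lt_hittingBtwn_Ici_iff {ι α : Type*} [ConditionallyCompleteLinearOrder ι] [WellFoundedLT ι]
    [LinearOrder α] {u : ι → Ω → α} {c : α} {n m k : ι} {ω : Ω} (hmono : Monotone (u · ω))
    (hn : ∀ j < n, u j ω < c) (hkm : k < m) :
    k < hittingBtwn u (Set.Ici c) n m ω ↔ u k ω < c := by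
  rw [← not_le, hittingBtwn_le_iff_of_lt k hkm, ← not_le, not_iff_not]
  constructor
  · rintro ⟨j, hj, hcj⟩
    exact le_trans hcj (hmono hj.2)
  · intro hck
    exact ⟨k, ⟨le_of_not_gt fun hkn => (hn k hkn).not_ge hck, le_rfl⟩, hck⟩

lemma hittingBtwn_Ici_eq_card_filter {α : Type*} [LinearOrder α] {u : ℕ → Ω → α} {c : α} {n m : ℕ}
    {ω : Ω} (hmono : Monotone (u · ω)) (hn : ∀ j < n, u j ω < c) :
    hittingBtwn u (Set.Ici c) n m ω = ((Finset.range m).filter (u · ω < c)).card := by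
  have hfilter : (Finset.range m).filter (u · ω < c) =
      Finset.range (hittingBtwn u (Set.Ici c) n m ω) := by
    ext k
    rw [Finset.mem_filter, Finset.mem_range, Finset.mem_range]
    constructor
    · rintro ⟨hkm, hk⟩
      exact (lt_hittingBtwn_Ici_iff hmono hn hkm).2 hk
    · intro hk
      have hkm : k < m := hk.trans_le (hittingBtwn_le ω)
      exact ⟨hkm, (lt_hittingBtwn_Ici_iff hmono hn hkm).1 hk⟩
  rw [hfilter, Finset.card_range]

variable [MeasurableSpace Ω] {μ : Measure Ω} [IsFiniteMeasure μ]

lemma integral_card_filter {ι : Type*} (s : Finset ι) {p : ι → Ω → Prop}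
    [∀ ω, DecidablePred (p · ω)] (hp : ∀ i ∈ s, MeasurableSet {ω | p i ω}) :
    ∫ ω, ((s.filter (p · ω)).card : ℝ) ∂μ = ∑ i ∈ s, μ.real {ω | p i ω} := by
  have hcard (ω : Ω) : ((s.filter (p · ω)).card : ℝ) =
      ∑ i ∈ s, {ω | p i ω}.indicator (1 : Ω → ℝ) ω := by
    simp only [Finset.natCast_card_filter, Set.indicator_apply, Set.mem_ofPred_eq, Pi.one_apply]
  simp_rw [hcard]
  have hintegrable : ∀ i ∈ s, Integrable ({ω | p i ω}.indicator (1 : Ω → ℝ)) μ := fun i hi =>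
    (integrable_const (1 : ℝ)).indicator (hp i hi)
  rw [integral_finsetSum s hintegrable]
  exact Finset.sum_congr rfl fun i hi => integral_indicator_one (hp i hi)

lemma integral_hittingBtwn_Ici {α : Type*} [LinearOrder α] [TopologicalSpace α]
    [ClosedIciTopology α] [MeasurableSpace α] [OpensMeasurableSpace α] {u : ℕ → Ω → α} {c : α}
    {n m : ℕ} (hu : ∀ k, Measurable (u k)) (hmono : ∀ᵐ ω ∂μ, Monotone (u · ω))
    (hn : ∀ᵐ ω ∂μ, ∀ j < n, u j ω < c) :
    ∫ ω, ((hittingBtwn u (Set.Ici c) n m ω : ℕ) : ℝ) ∂μ =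
      ∑ k ∈ Finset.range m, μ.real {ω | u k ω < c} := by
  have hlt : ∀ k ∈ Finset.range m, MeasurableSet {ω | u k ω < c} := fun k _ =>
    hu k measurableSet_Iio
  rw [← integral_card_filter (Finset.range m) hlt]
  refine integral_congr_ae ?_
  filter_upwards [hmono, hn] with ω hmonoω hnω
  rw [hittingBtwn_Ici_eq_card_filter hmonoω hnω]

end HittingTime

section PartialSum

variable {R : Type*} [AddCommMonoid R] {N : ℕ}

/-- The sum of the first `k` coordinates of a vector; all coordinates are summed when `N < k`. -/
def partialSum (k : ℕ) (x : Fin N → R) : R :=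
  ∑ i ∈ Finset.univ.filter (fun i : Fin N => (i : ℕ) < k), x i

lemma partialSum_zero (x : Fin N → R) : partialSum 0 x = 0 := by
  simp [partialSum]

lemma partialSum_succ (k : ℕ) (x : Fin (N + 1) → R) :
    partialSum (k + 1) x = x 0 + partialSum k (Fin.tail x) := by
  simp [partialSum, Finset.sum_filter, Fin.sum_univ_succ, Fin.tail]

lemma monotone_partialSum [PartialOrder R] [IsOrderedAddMonoid R] {x : Fin N → R}
    (hx : ∀ i, 0 ≤ x i) : Monotone (partialSum · x) := fun _ _ hkl =>
  Finset.sum_le_sum_of_subset_of_nonneg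
    (Finset.monotone_filter_right _ fun _ _ hi => lt_of_lt_of_le hi hkl) fun i _ _ => hx i

lemma measurable_partialSum [MeasurableSpace R] [MeasurableAdd₂ R] (k : ℕ) :
    Measurable (partialSum k : (Fin N → R) → R) := by
  unfold partialSum
  fun_prop

lemma measureReal_pi_partialSum_succ_lt (μ : Measure ℝ) [IsFiniteMeasure μ] (k : ℕ) (t : ℝ) :
    (Measure.pi fun _ : Fin (N + 1) => μ).real {x | partialSum (k + 1) x < t} =
      ∫ u, (Measure.pi fun _ : Fin N => μ).real {x | partialSum k x < t - u} ∂μ := by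
  let A : Set (ℝ × (Fin N → ℝ)) := {p | p.1 + partialSum k p.2 < t}
  have hA : MeasurableSet A := measurableSet_lt
    (measurable_fst.add ((measurable_partialSum k).comp measurable_snd)) measurable_const
  have hpre : {x : Fin (N + 1) → ℝ | partialSum (k + 1) x < t} =
      MeasurableEquiv.piFinSuccAbove (fun _ => ℝ) 0 ⁻¹' A := by
    ext x
    simp only [Set.mem_ofPred_eq, partialSum_succ]
    rfl
  have hsection (u : ℝ) : {x : Fin N → ℝ | partialSum k x < t - u} = Prod.mk u ⁻¹' A := by
    ext x
    exact lt_sub_iff_add_lt' (b := partialSum k x)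
  simp_rw [hpre, hsection, measureReal_def]
  rw [(measurePreserving_piFinSuccAbove (fun _ => μ) 0).measure_preimage hA.nullMeasurableSet,
    Measure.prod_apply hA, integral_toReal (measurable_measure_prodMk_left hA).aemeasurable]
  exact Filter.Eventually.of_forall fun _ => measure_lt_top _ _

end PartialSum

section Uniform

variable {a b : ℝ}

lemma isProbabilityMeasure_unif (hab : a < b) : IsProbabilityMeasure (unif a b) :=
  ProbabilityTheory.cond_isProbabilityMeasure_of_finite (by simpa using hab) (by simp)

lemma integral_unif (hab : a ≤ b) (f : ℝ → ℝ) :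
    ∫ x, f x ∂unif a b = (b - a)⁻¹ * ∫ x in a..b, f x := by
  rw [unif, integral_smul_measure, integral_Icc_eq_integral_Ioc,
    intervalIntegral.integral_of_le hab, Real.volume_Icc, ENNReal.toReal_inv,
    ENNReal.toReal_ofReal (sub_nonneg.2 hab), smul_eq_mul]

lemma ae_pi_unif_mem_Icc {N : ℕ} (hab : a < b) :
    ∀ᵐ x ∂Measure.pi fun _ : Fin N => unif a b, ∀ i, x i ∈ Set.Icc a b := by
  have := isProbabilityMeasure_unif hab
  have hcoord : ∀ᵐ u ∂unif a b, u ∈ Set.Icc a b :=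
    ProbabilityTheory.ae_cond_mem measurableSet_Icc
  exact Filter.eventually_all.2 fun _ => Measure.tendsto_eval_ae_ae.eventually hcoord

end Uniform

lemma fwdDiff_iter_sub_nsmul {M G : Type*} [AddCommGroup M] [AddCommGroup G] (h : M) (f : M → G)
    (n : ℕ) (y : M) :
    (Δ_[h])^[n] f (y - n • h) =
      ∑ j ∈ Finset.range (n + 1), ((-1 : ℤ) ^ j * n.choose j) • f (y - j • h) := by
  rw [fwdDiff_iter_eq_sum_shift, ← Finset.sum_range_reflect]
  refine Finset.sum_congr rfl fun j hj => ?_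
  have hjn : j ≤ n := Finset.mem_range_succ_iff.1 hj
  rw [Nat.add_sub_cancel, Nat.sub_sub_self hjn, Nat.choose_symm hjn, sub_nsmul h hjn]
  congr 2
  abel

lemma fwdDiff_iter_sub_natCast (f : ℝ → ℝ) (n : ℕ) (y : ℝ) :
    (Δ_[1])^[n] f (y - n) =
      ∑ j ∈ Finset.range (n + 1), (-1 : ℝ) ^ j * n.choose j * f (y - j) := by
  simpa using fwdDiff_iter_sub_nsmul 1 f n y

lemma sum_alternating_choose_mul_sub_pow (k : ℕ) (x : ℝ) :
    ∑ j ∈ Finset.range (k + 1), (-1 : ℝ) ^ j * k.choose j * (x - j) ^ k = k ! := by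
  rw [← fwdDiff_iter_sub_natCast (· ^ k), fwdDiff_iter_eq_factorial]
  rfl

/-- The truncated power `x₊ ^ k`. It vanishes at `0` even for `k = 0`, so that `truncPow 0` is the
indicator function of the positive reals. -/
noncomputable def truncPow (k : ℕ) : ℝ → ℝ := (Set.Ioi 0).indicator (· ^ k)

section TruncPow

variable {k : ℕ} {x : ℝ}

lemma truncPow_of_pos (hx : 0 < x) : truncPow k x = x ^ k :=
  Set.indicator_of_mem (Set.mem_Ioi.2 hx) _

lemma truncPow_of_nonpos (hx : x ≤ 0) : truncPow k x = 0 :=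
  Set.indicator_of_notMem (Set.notMem_Ioi.2 hx) _

lemma truncPow_of_nonneg (hk : k ≠ 0) (hx : 0 ≤ x) : truncPow k x = x ^ k := by
  rcases hx.eq_or_lt with rfl | hpos
  · rw [truncPow_of_nonpos le_rfl, zero_pow hk]
  · exact truncPow_of_pos hpos

lemma intervalIntegrable_truncPow (k : ℕ) (x y : ℝ) :
    IntervalIntegrable (truncPow k) volume x y :=
  have hpow := (continuous_pow k).intervalIntegrable (μ := volume) x y
  ⟨hpow.1.indicator measurableSet_Ioi, hpow.2.indicator measurableSet_Ioi⟩

lemma integral_zero_truncPow (k : ℕ) (x : ℝ) :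
    ∫ u in 0..x, truncPow k u = truncPow (k + 1) x / (k + 1) := by
  rcases le_or_gt x 0 with hx | hx
  · have hzero : Set.EqOn (truncPow k) 0 (Set.uIcc 0 x) := fun u hu =>
      truncPow_of_nonpos (Set.uIcc_of_ge hx ▸ hu).2
    rw [intervalIntegral.integral_congr hzero, truncPow_of_nonpos hx]
    simp
  · have hpow : ∀ u ∈ Set.uIoc 0 x, truncPow k u = u ^ k := fun u hu =>
      truncPow_of_pos (Set.uIoc_of_le hx.le ▸ hu).1
    rw [intervalIntegral.integral_congr_ae (.of_forall hpow), integral_pow, truncPow_of_pos hx]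
    simp

lemma integral_truncPow (k : ℕ) (x y : ℝ) :
    ∫ u in x..y, truncPow k u = (truncPow (k + 1) y - truncPow (k + 1) x) / (k + 1) := by
  rw [← intervalIntegral.integral_interval_sub_left (intervalIntegrable_truncPow k 0 y)
    (intervalIntegrable_truncPow k 0 x), integral_zero_truncPow, integral_zero_truncPow, sub_div]

end TruncPow

/-- The Irwin–Hall distribution function: the probability that the sum of `k` independent uniform
variables on `[0, 1]` is less than `x`. The inequality is strict, which matters only for `k = 0`. -/
noncomputable def irwinHallCDF (k : ℕ) (x : ℝ) : ℝ :=
  1 / k ! * ∑ j ∈ Finset.range (k + 1), (-1 : ℝ) ^ j * k.choose j * truncPow k (x - j)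

section IrwinHall

variable {k : ℕ} {x : ℝ}

lemma irwinHallCDF_zero : irwinHallCDF 0 = (Set.Ioi 0).indicator 1 := by
  ext x
  simp [irwinHallCDF, truncPow, Set.indicator_apply]

lemma irwinHallCDF_eq_fwdDiff (k : ℕ) (x : ℝ) :
    irwinHallCDF k x = 1 / k ! * (Δ_[1])^[k] (truncPow k) (x - k) := by
  rw [irwinHallCDF, fwdDiff_iter_sub_natCast]

lemma integral_irwinHallCDF (k : ℕ) (x : ℝ) :
    ∫ u in (x - 1)..x, irwinHallCDF k u = irwinHallCDF (k + 1) x := by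
  have hterm (j : ℕ) : ∫ u in (x - 1)..x, truncPow k (u - j) =
      (k + 1 : ℝ)⁻¹ * Δ_[1] (truncPow (k + 1)) (x - 1 - j) := by
    rw [intervalIntegral.integral_comp_sub_right (truncPow k), integral_truncPow, fwdDiff,
      div_eq_inv_mul, show x - 1 - j + 1 = x - j by ring]
  have hintegrable (j : ℕ) : IntervalIntegrable (fun u => truncPow k (u - j)) volume (x - 1) x := by
    simpa using (intervalIntegrable_truncPow k (x - 1 - j) (x - j)).comp_sub_right (j : ℝ)
  calc ∫ u in (x - 1)..x, irwinHallCDF k u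
      = 1 / k ! * ∑ j ∈ Finset.range (k + 1), (-1 : ℝ) ^ j * k.choose j *
          ((k + 1 : ℝ)⁻¹ * Δ_[1] (truncPow (k + 1)) (x - 1 - j)) := by
        simp_rw [irwinHallCDF]
        rw [intervalIntegral.integral_const_mul,
          intervalIntegral.integral_finsetSum fun j _ => (hintegrable j).const_mul _]
        simp_rw [intervalIntegral.integral_const_mul, hterm]
    _ = 1 / (k + 1)! * ∑ j ∈ Finset.range (k + 1), (-1 : ℝ) ^ j * k.choose j *
          Δ_[1] (truncPow (k + 1)) (x - 1 - j) := by
        rw [Nat.factorial_succ, Finset.mul_sum, Finset.mul_sum]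
        refine Finset.sum_congr rfl fun j _ => ?_
        push_cast
        field_simp
    _ = irwinHallCDF (k + 1) x := by
        rw [← fwdDiff_iter_sub_natCast, ← Function.iterate_succ_apply, irwinHallCDF_eq_fwdDiff,
          Nat.cast_succ, sub_add_eq_sub_sub_swap]

lemma irwinHallCDF_of_lt (hx : k < x) : irwinHallCDF k x = 1 := by
  have hterm : ∀ j ∈ Finset.range (k + 1), (-1 : ℝ) ^ j * k.choose j * truncPow k (x - j) =
      (-1 : ℝ) ^ j * k.choose j * (x - j) ^ k := fun j hj => by
    have hjk : (j : ℝ) ≤ k := by exact_mod_cast Finset.mem_range_succ_iff.1 hj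
    rw [truncPow_of_pos (sub_pos.2 (hjk.trans_lt hx))]
  rw [irwinHallCDF, Finset.sum_congr rfl hterm, sum_alternating_choose_mul_sub_pow,
    one_div_mul_cancel (by positivity)]

lemma irwinHallCDF_of_le (hk : k ≠ 0) (hx : 0 ≤ x) (hxk : x ≤ k) :
    irwinHallCDF k x =
      1 / k ! * ∑ j ∈ Finset.range (⌊x⌋₊ + 1), (-1 : ℝ) ^ j * k.choose j * (x - j) ^ k := by
  have hfloor : ⌊x⌋₊ ≤ k := Nat.floor_le_of_le hxk
  rw [irwinHallCDF, ← Finset.sum_subset (Finset.range_mono (Nat.succ_le_succ hfloor))]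
  · congr 1
    refine Finset.sum_congr rfl fun j hj => ?_
    have hjx : (j : ℝ) ≤ x := (Nat.le_floor_iff hx).1 (Finset.mem_range_succ_iff.1 hj)
    rw [truncPow_of_nonneg hk (sub_nonneg.2 hjx)]
  · intro j _ hj
    have hxj : x < j := (Nat.floor_lt hx).1 (by simpa using hj)
    rw [truncPow_of_nonpos (sub_nonpos.2 hxj.le), mul_zero]

lemma irwinHallCDF_eq_sum_floor (hx : 0 ≤ x) (hx₀ : k = 0 → 0 < x) :
    irwinHallCDF k x = 1 / k ! * ∑ j ∈ Finset.range (min ⌊x⌋₊ k + 1),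
      (-1 : ℝ) ^ j * k.choose j * (min x k - j) ^ k := by
  rcases le_or_gt x k with hxk | hkx
  · have hk : k ≠ 0 := by
      rintro rfl
      exact (hx₀ rfl).not_ge (by simpa using hxk)
    rw [min_eq_left hxk, min_eq_left (Nat.floor_le_of_le hxk), irwinHallCDF_of_le hk hx hxk]
  · rw [min_eq_right hkx.le, min_eq_right (Nat.le_floor hkx.le), irwinHallCDF_of_lt hkx,
      sum_alternating_choose_mul_sub_pow, one_div_mul_cancel (by positivity)]

end IrwinHall

lemma integral_unif_irwinHallCDF {a b : ℝ} (hab : a < b) (k : ℕ) (t : ℝ) :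
    ∫ u, irwinHallCDF k ((t - u - k * a) / (b - a)) ∂unif a b =
      irwinHallCDF (k + 1) ((t - (k + 1 : ℕ) * a) / (b - a)) := by
  have hba : b - a ≠ 0 := sub_ne_zero.2 hab.ne'
  have harg (u : ℝ) : (t - u - k * a) / (b - a) = (t - k * a) / (b - a) - u / (b - a) := by
    ring
  have hupper : (t - k * a) / (b - a) - a / (b - a) = (t - (k + 1 : ℕ) * a) / (b - a) := by
    push_cast
    ring
  have hlower : (t - k * a) / (b - a) - b / (b - a) = (t - (k + 1 : ℕ) * a) / (b - a) - 1 := by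
    push_cast
    field_simp
    ring
  simp_rw [harg]
  rw [integral_unif hab.le, ← smul_eq_mul,
    intervalIntegral.inv_smul_integral_comp_sub_div (irwinHallCDF k), hupper, hlower,
    integral_irwinHallCDF]

lemma measureReal_pi_unif_partialSum_lt {a b : ℝ} (hab : a < b) {k N : ℕ} (hkN : k ≤ N) (t : ℝ) :
    (Measure.pi fun _ : Fin N => unif a b).real {x | partialSum k x < t} =
      irwinHallCDF k ((t - k * a) / (b - a)) := by
  have := isProbabilityMeasure_unif hab
  induction k generalizing N t with
  | zero =>
    have hsign : 0 < t / (b - a) ↔ 0 < t := div_pos_iff_of_pos_right (sub_pos.2 hab)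
    by_cases ht : 0 < t <;> simp [partialSum_zero, irwinHallCDF_zero, hsign, ht]
  | succ k ih =>
    obtain ⟨M, rfl⟩ : ∃ M, N = M + 1 := Nat.exists_eq_succ_of_ne_zero (by omega)
    rw [measureReal_pi_partialSum_succ_lt]
    simp_rw [ih (Nat.le_of_succ_le_succ hkN)]
    exact integral_unif_irwinHallCDF hab k t

lemma toNat_min_max_floor (x : ℝ) (k : ℕ) :
    (min (max ⌊x⌋ 0) (k : ℤ)).toNat = min ⌊x⌋₊ k := by
  rw [← Int.floor_toNat]
  omega

/-- Exact expression for the expected number of transmissions for the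
non-ordered sequential estimation scheme with i.i.d. uniform-`[a,b]` precisions:
`E[k*] = ∑_{k=0}^{N-1} (1/k!) ∑_{j=0}^{γ*_k} (-1)^j C(k,j) (min(γ'_k,k) - j)^k`,
where `γ'_k = (γ - k a)/(b - a)` and `γ*_k = min(max(⌊γ'_k⌋,0),k)`. -/
theorem stmt_3 (N : ℕ) (hN : 1 ≤ N) (a b : ℝ) (ha : 0 ≤ a) (hab : a < b)
    (γ : ℝ) (hγ : 0 < γ) (hγa : (N - 1 : ℕ) * a ≤ γ)
    (P : Measure (Fin N → ℝ)) (hP : P = Measure.pi fun _ => unif a b)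
    (S : ℕ → (Fin N → ℝ) → ℝ)
    (hS : ∀ k x, S k x = ∑ i ∈ Finset.univ.filter (fun i : Fin N => (i : ℕ) < k), x i)
    (kstar : (Fin N → ℝ) → ℕ)
    (hk : ∀ x, kstar x =
      if ∃ k, (1 ≤ k ∧ k ≤ N) ∧ γ ≤ S k x
      then sInf {k | (1 ≤ k ∧ k ≤ N) ∧ γ ≤ S k x}
      else N) :
    ∫ x, (kstar x : ℝ) ∂P =
      ∑ k ∈ Finset.range N, (1 / (k.factorial : ℝ)) *
        ∑ j ∈ Finset.range ((min (max ⌊(γ - k * a) / (b - a)⌋ 0) (k : ℤ)).toNat + 1),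
          (-1 : ℝ) ^ j * (k.choose j : ℝ) *
            (min ((γ - k * a) / (b - a)) (k : ℝ) - j) ^ k := by
  obtain rfl : S = partialSum := funext₂ hS
  obtain rfl : kstar = hittingBtwn partialSum (Set.Ici γ) 1 N := funext hk
  subst hP
  have := isProbabilityMeasure_unif hab
  have hmono : ∀ᵐ x ∂Measure.pi fun _ : Fin N => unif a b, Monotone (partialSum · x) :=
    (ae_pi_unif_mem_Icc hab).mono fun x hx => monotone_partialSum fun i => ha.trans (hx i).1
  have hstart (x : Fin N → ℝ) : ∀ j < 1, partialSum j x < γ := fun j hj => by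
    rwa [Nat.lt_one_iff.1 hj, partialSum_zero]
  rw [integral_hittingBtwn_Ici measurable_partialSum hmono (.of_forall hstart)]
  refine Finset.sum_congr rfl fun k hkN => ?_
  rw [Finset.mem_range] at hkN
  have hka : k * a ≤ γ := le_trans (by gcongr; omega) hγa
  have hnonneg : 0 ≤ (γ - k * a) / (b - a) := div_nonneg (sub_nonneg.2 hka) (sub_pos.2 hab).le
  have hpos : k = 0 → 0 < (γ - k * a) / (b - a) := by
    rintro rfl
    simpa using div_pos hγ (sub_pos.2 hab)
  rw [measureReal_pi_unif_partialSum_lt hab hkN.le, irwinHallCDF_eq_sum_floor hnonneg hpos,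
    toNat_min_max_floor]
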